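/- Let A be a commutative ring and B an A-algebra which is finite and free as an A-module. Let C := B ⊗_A B, m : C → B the multiplication map, J := ker m, and let h : C → Hom_A(B*, B) be the map h(b₁ ⊗ b₂)(f) = f(b₁)·b₂, where B* := Hom_A(B,A). Then for every x ∈ Ann_C(J), the composite τ_{B/A} ∘ h(x) : B* → B* equals multiplication by m(x) in the B-module structure of B*; that is, τ_{B/A}(h(x)(f)) = m(x)·f for all f ∈ B*. -/

import Mathlib

open scoped TensorProduct

/-- The `A`-linear map `h : B ⊗[A] B → Hom_A(B*, B)`, `h (b₁ ⊗ b₂) f = f b₁ • b₂`. -/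
noncomputable def tensorToHomDual (A B : Type*) [CommRing A] [CommRing B] [Algebra A B] :
    B ⊗[A] B →ₗ[A] ((B →ₗ[A] A) →ₗ[A] B) :=
  (dualTensorHom A (Module.Dual A B) B).comp
    (TensorProduct.map (Module.Dual.eval A B) LinearMap.id)

/-- Let `A` be a commutative ring and `B` an `A`-algebra which is finite and
free as an `A`-module.  Let `C := B ⊗[A] B`, `m : C → B` the multiplication map, `J := ker m`,
and `h : C → Hom_A(B*, B)` given by `h (b₁ ⊗ b₂) f = f b₁ • b₂` where `B* = Hom_A(B, A)`.
Then for every `x ∈ Ann_C J`, the composite `τ_{B/A} ∘ h x : B* → B*` is multiplication by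
`m x` for the `B`-module structure `(b · f) y = f (b * y)` on `B*`: for all `f : B*` and
`y : B` one has `Tr_{B/A}((h x f) * y) = f (m x * y)`. -/
theorem trace_comp_tensorToHomDual_eq_smul
    {A B : Type*} [CommRing A] [CommRing B] [Algebra A B]
    [Module.Finite A B] [Module.Free A B]
    (x : B ⊗[A] B)
    (hx : ∀ j ∈ RingHom.ker (Algebra.TensorProduct.lmul' A : B ⊗[A] B →ₐ[A] B), x * j = 0) :
    ∀ (f : B →ₗ[A] A) (y : B),
      Algebra.trace A B (tensorToHomDual A B x f * y) =
        f (Algebra.TensorProduct.lmul' A (S := B) x * y) := by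
  intro f y
  have key : ∀ z : B ⊗[A] B,
      Algebra.trace A B (tensorToHomDual A B z f * y) =
        f (Algebra.trace B (B ⊗[A] B) (z * (1 ⊗ₜ y))) := by
    intro z
    induction z with
    | zero => simp
    | add a b ha hb => simp only [map_add, add_mul, LinearMap.add_apply, ha, hb]
    | tmul b c =>
      have h1 : (b ⊗ₜ[A] c : B ⊗[A] B) * (1 ⊗ₜ y) = b • ((1 : B) ⊗ₜ[A] (c * y)) := by
        simp [Algebra.TensorProduct.tmul_mul_tmul, TensorProduct.smul_tmul']
      have h2 : Algebra.trace B (B ⊗[A] B) ((1 : B) ⊗ₜ[A] (c * y)) =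
          algebraMap A B (Algebra.trace A B (c * y)) := by
        rw [Algebra.trace_apply, Algebra.trace_apply, ← LinearMap.trace_baseChange]
        congr 1
        ext u
        simp
      rw [h1, map_smul, h2, smul_eq_mul, mul_comm b, ← Algebra.smul_def, map_smul]
      simp [tensorToHomDual, mul_comm]
  rw [key]
  congr 1
  let m : B ⊗[A] B →ₗ[B] B :=
    (Algebra.TensorProduct.lmul'' A (S := B)).toLinearMap
  let w := x * ((1 : B) ⊗ₜ[A] y)
  have hm : ∀ c, m c = Algebra.TensorProduct.lmul' A (S := B) c := fun _ => rfl
  have hw : Algebra.lmul B (B ⊗[A] B) w =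
      (LinearMap.toSpanSingleton B (B ⊗[A] B) w) ∘ₗ m := by
    refine LinearMap.ext fun c => ?_
    have h0 := hx (c - (m c) ⊗ₜ 1) (by
      rw [RingHom.mem_ker, map_sub, Algebra.TensorProduct.lmul'_apply_tmul, mul_one, hm, sub_self])
    have h3 : x * c = x * ((m c) ⊗ₜ 1) := by
      rw [mul_sub] at h0
      exact sub_eq_zero.mp h0
    have h4 : m c • w = ((m c) ⊗ₜ[A] (1 : B)) * w := by
      rw [Algebra.smul_def]; rfl
    change w * c = m c • w
    rw [h4]
    calc w * c = (x * c) * ((1 : B) ⊗ₜ[A] y) := by simp only [w]; ring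
      _ = _ := by rw [h3]; simp only [w]; ring
  change Algebra.trace B (B ⊗[A] B) w = _
  rw [Algebra.trace_apply, hw, LinearMap.trace_comp_comm']
  have h5 : m ∘ₗ LinearMap.toSpanSingleton B (B ⊗[A] B) w = (m w) • LinearMap.id := by
    ext
    simp
  rw [h5, map_smul, LinearMap.trace_id, hm]
  rcases subsingleton_or_nontrivial B with hB | hB
  · exact Subsingleton.elim _ _
  · simp [w]
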